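/- arXiv:0704.2576 — 3 statements merged into one kernel-verified Lean document; each statement's English description precedes it below -/
import Mathlib

section
/- Let M be a model category and A a cofibrant object of M. Let C, with structure maps (i₀, i₁) : A ⊔ A → C and p : C → A, and C′, with structure maps (i₀′, i₁′) : A ⊔ A → C′ and p′ : C′ → A, be two cylinder objects for A. Form the pushout C″ of i₁ : A → C and i₀′ : A → C′. Then C″, equipped with the map A ⊔ A → C″ whose components are the composites A → C → C″ (via i₀) and A → C′ → C″ (via i₁′), together with the map C″ → A induced by p and p′, is again a cylinder object for A. -/
open CategoryTheory CategoryTheory.Limits CategoryTheory.MonoidalCategory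

universe v u v₂ u₂

namespace Paper

variable {C : Type u} [Category.{v} C]

/-- `f` is a retract of `g` in the arrow category. -/
def IsRetractOf {A B X Y : C} (f : A ⟶ B) (g : X ⟶ Y) : Prop :=
  ∃ (iA : A ⟶ X) (rA : X ⟶ A) (iB : B ⟶ Y) (rB : Y ⟶ B),
    iA ≫ rA = 𝟙 A ∧ iB ≫ rB = 𝟙 B ∧ iA ≫ g = f ≫ iB ∧ rA ≫ f = g ≫ rB

/-- The class of maps having the left lifting property with respect to every map in `T`. -/
def LLP (T : MorphismProperty C) : MorphismProperty C := fun _ _ i =>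
  ∀ ⦃X Y : C⦄ (p : X ⟶ Y), T p → HasLiftingProperty i p

/-- The class of maps having the right lifting property with respect to every map in `T`. -/
def RLP (T : MorphismProperty C) : MorphismProperty C := fun _ _ p =>
  ∀ ⦃A B : C⦄ (i : A ⟶ B), T i → HasLiftingProperty i p

/-- A model structure on a category: weak equivalences, cofibrations and fibrations,
satisfying the usual axioms (two-out-of-three, retracts, lifting, factorization).
Completeness and cocompleteness are imposed separately. -/
structure ModelStructure (C : Type u) [Category.{v} C] where
  W : MorphismProperty C
  Cof : MorphismProperty C
  Fib : MorphismProperty C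
  two_out_of_three : ∀ ⦃X Y Z : C⦄ (f : X ⟶ Y) (g : Y ⟶ Z),
      (W f → W g → W (f ≫ g)) ∧ (W f → W (f ≫ g) → W g) ∧ (W g → W (f ≫ g) → W f)
  retract_W : ∀ ⦃A B X Y : C⦄ {f : A ⟶ B} {g : X ⟶ Y}, IsRetractOf f g → W g → W f
  retract_Cof : ∀ ⦃A B X Y : C⦄ {f : A ⟶ B} {g : X ⟶ Y}, IsRetractOf f g → Cof g → Cof f
  retract_Fib : ∀ ⦃A B X Y : C⦄ {f : A ⟶ B} {g : X ⟶ Y}, IsRetractOf f g → Fib g → Fib f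
  lift_Cof_TrivFib : ∀ ⦃A B X Y : C⦄ (i : A ⟶ B) (p : X ⟶ Y),
      Cof i → Fib p → W p → HasLiftingProperty i p
  lift_TrivCof_Fib : ∀ ⦃A B X Y : C⦄ (i : A ⟶ B) (p : X ⟶ Y),
      Cof i → W i → Fib p → HasLiftingProperty i p
  factor_Cof_TrivFib : ∀ ⦃X Y : C⦄ (f : X ⟶ Y),
      ∃ (Z : C) (i : X ⟶ Z) (p : Z ⟶ Y), Cof i ∧ Fib p ∧ W p ∧ i ≫ p = f
  factor_TrivCof_Fib : ∀ ⦃X Y : C⦄ (f : X ⟶ Y),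
      ∃ (Z : C) (i : X ⟶ Z) (p : Z ⟶ Y), Cof i ∧ W i ∧ Fib p ∧ i ≫ p = f

namespace ModelStructure

variable (M : ModelStructure C)

/-- Trivial cofibrations. -/
def TrivCof : MorphismProperty C := fun _ _ f => M.Cof f ∧ M.W f

/-- Trivial fibrations. -/
def TrivFib : MorphismProperty C := fun _ _ f => M.Fib f ∧ M.W f

/-- An object is cofibrant if the map from the initial object is a cofibration. -/
def Cofibrant [HasInitial C] (X : C) : Prop := M.Cof (initial.to X)

/-- An object is fibrant if the map to the terminal object is a fibration. -/
def Fibrant [HasTerminal C] (X : C) : Prop := M.Fib (terminal.from X)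

end ModelStructure

/-- A cylinder object for `X`: a factorization of the fold map `X ⊔ X → X` into a
cofibration `(i₀, i₁)` followed by a weak equivalence `p`. -/
structure IsCylinder [HasBinaryCoproducts C] (M : ModelStructure C) (X Cyl : C)
    (i₀ i₁ : X ⟶ Cyl) (p : Cyl ⟶ X) : Prop where
  cof : M.Cof (coprod.desc i₀ i₁)
  weq : M.W p
  comp₀ : i₀ ≫ p = 𝟙 X
  comp₁ : i₁ ≫ p = 𝟙 X

section Monoidal

variable [MonoidalCategory C]

/-- The pushout product of `i : A ⟶ B` and `j : X ⟶ Y`: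
the induced map `(B ⊗ X) ⊔_{A ⊗ X} (A ⊗ Y) ⟶ B ⊗ Y`. -/
noncomputable def pushoutProduct {A B X Y : C} (i : A ⟶ B) (j : X ⟶ Y)
    [HasPushout (i ▷ X) (A ◁ j)] :
    pushout (i ▷ X) (A ◁ j) ⟶ B ⊗ Y :=
  pushout.desc (B ◁ j) (i ▷ Y) (whisker_exchange i j).symm

/-- The pushout-product axiom for a model structure on a monoidal category: the pushout
product of two cofibrations is a cofibration, which is trivial if one of the two is. -/
def PushoutProductAxiom [HasPushouts C] (M : ModelStructure C) : Prop :=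
  ∀ ⦃A B X Y : C⦄ (i : A ⟶ B) (j : X ⟶ Y), M.Cof i → M.Cof j →
    M.Cof (pushoutProduct i j) ∧
      (M.W i → M.W (pushoutProduct i j)) ∧ (M.W j → M.W (pushoutProduct i j))

/-- The pullback-hom map `[B, X] ⟶ [B, Y] ×_{[A, Y]} [A, X]` induced by `j : A ⟶ B`
and `p : X ⟶ Y` via the internal hom. -/
noncomputable def pullbackHom [MonoidalClosed C] {A B X Y : C} (j : A ⟶ B) (p : X ⟶ Y)
    [HasPullback ((MonoidalClosed.pre j).app Y) ((ihom A).map p)] :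
    (ihom B).obj X ⟶ pullback ((MonoidalClosed.pre j).app Y) ((ihom A).map p) :=
  pullback.lift ((ihom B).map p) ((MonoidalClosed.pre j).app X)
    ((MonoidalClosed.pre j).naturality p)

/-- Two maps `f g : X ⟶ Y` are `V`-homotopic if there are a cylinder object `CS` for the
monoidal unit and a homotopy `H : CS ⊗ X ⟶ Y` connecting them. -/
def VHomotopic [HasBinaryCoproducts C] (M : ModelStructure C) {X Y : C} (f g : X ⟶ Y) : Prop :=
  ∃ (CS : C) (i₀ i₁ : 𝟙_ C ⟶ CS) (p : CS ⟶ 𝟙_ C) (_ : IsCylinder M (𝟙_ C) CS i₀ i₁ p)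
    (H : CS ⊗ X ⟶ Y),
      (λ_ X).inv ≫ i₀ ▷ X ≫ H = f ∧ (λ_ X).inv ≫ i₁ ▷ X ≫ H = g

end Monoidal

/-- Two maps `f g : X ⟶ Y` are left homotopic if there are a cylinder object `CX` for `X`
and a homotopy `H : CX ⟶ Y` connecting them. -/
def LeftHomotopic [HasBinaryCoproducts C] (M : ModelStructure C) {X Y : C} (f g : X ⟶ Y) : Prop :=
  ∃ (CX : C) (i₀ i₁ : X ⟶ CX) (p : CX ⟶ X) (_ : IsCylinder M X CX i₀ i₁ p) (H : CX ⟶ Y),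
    i₀ ≫ H = f ∧ i₁ ≫ H = g

/-- An object `A` is finitely presentable if `Hom(A, –)` preserves (small) filtered colimits. -/
def FinitelyPresentable (A : C) : Prop :=
  ∀ (J : Type v) (_ : SmallCategory J), IsFiltered J →
    Nonempty (PreservesColimitsOfShape J (coyoneda.obj (Opposite.op A)))

section Cell

/-- The restriction of a diagram `F : β ⥤ C` to the elements below `b`. -/
def restrictIio {β : Type v} [Preorder β] (F : β ⥤ C) (b : β) : Set.Iio b ⥤ C where
  obj a := F.obj a.1
  map {a a'} h := F.map (homOfLE (leOfHom h : a.1 ≤ a'.1))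
  map_id a := F.map_id a.1
  map_comp f g := by rw [← F.map_comp]; rfl

/-- The canonical cocone on the restriction of `F` below `b`, with point `F.obj b`. -/
def coconeIio {β : Type v} [Preorder β] (F : β ⥤ C) (b : β) : Cocone (restrictIio F b) where
  pt := F.obj b
  ι :=
    { app := fun a => F.map (homOfLE a.2.le)
      naturality := fun a a' h => by
        dsimp [restrictIio]
        rw [Category.comp_id, ← F.map_comp]
        rfl }

/-- A bundled well-ordered index type with a bottom element and successors. -/
class WellOrderedBot (β : Type v) extends LinearOrder β, OrderBot β, SuccOrder β where
  wf : WellFoundedLT β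

/-- `f` is a transfinite composition of maps in `R`: there is a continuous (smooth at limit
stages) diagram indexed by a well-ordered set, whose successor maps lie in `R`, such that `f`
is (isomorphic to) the map from the bottom stage into the colimit. -/
def IsTransfiniteCompositionOf (R : MorphismProperty C) : MorphismProperty C := fun X Y f =>
  ∃ (β : Type v) (_ : WellOrderedBot β) (F : β ⥤ C) (c : Cocone F) (_ : IsColimit c)
    (e₀ : X ≅ F.obj ⊥) (e₁ : c.pt ≅ Y),
      (∀ b : β, ¬IsMax b → R (F.map (homOfLE (Order.le_succ b)))) ∧
      (∀ b : β, Order.IsSuccLimit b → Nonempty (IsColimit (coconeIio F b))) ∧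
      f = e₀.hom ≫ c.ι.app ⊥ ≫ e₁.hom

/-- Cobase changes (pushouts) of maps in `R`. -/
def CobaseChangeOf (R : MorphismProperty C) : MorphismProperty C := fun X Y f =>
  ∃ (A B : C) (r : A ⟶ B) (t : A ⟶ X) (b : B ⟶ Y), R r ∧ IsPushout t r f b

/-- `R`-cell: transfinite compositions of cobase changes of maps in `R`. -/
def Cell (R : MorphismProperty C) : MorphismProperty C :=
  IsTransfiniteCompositionOf (CobaseChangeOf R)

/-- The class of maps of the form `r ▷ Q = r ⊗ id_Q`, for `r` in `R` and `Q` an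
arbitrary object. -/
inductive TensorObjAux [MonoidalCategory C] (R : MorphismProperty C) : ∀ (X Y : C), (X ⟶ Y) → Prop
  | mk {A B : C} (r : A ⟶ B) (Q : C) (hr : R r) : TensorObjAux R (A ⊗ Q) (B ⊗ Q) (r ▷ Q)

/-- The class `R ⊗ Ob(C)` of maps `r ⊗ id_Q` with `r ∈ R`. -/
def tensorWithObjects [MonoidalCategory C] (R : MorphismProperty C) : MorphismProperty C :=
  fun X Y f => TensorObjAux R X Y f

/-- A monoidal model category is strongly left proper if the cobase change of a weak
equivalence along any map in `(cof ⊗ Ob(V))`-cell is a weak equivalence. -/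
def StronglyLeftProper [MonoidalCategory C] (M : ModelStructure C) : Prop :=
  ∀ ⦃A B A' B' : C⦄ (w : A ⟶ B) (g : A ⟶ A') (g' : B ⟶ B') (w' : A' ⟶ B'),
    M.W w → Cell (tensorWithObjects M.Cof) g → IsPushout w g g' w' → M.W w'

end Cell

end Paper

/-! Write `G` for the pushout of `i₁` and `i₀'`. Since `A` is cofibrant, the ends of a cylinder
object are trivial cofibrations. Hence `Cyl ⟶ G`, a cobase change of `i₀'`, is a trivial
cofibration, and `G ⟶ A` is a weak equivalence by two-out-of-three. The map `A ⨿ A ⟶ G` factors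
through the cofibration `i₀ ⨿ 𝟙 : A ⨿ A ⟶ Cyl ⨿ A`; the second factor `Cyl ⨿ A ⟶ G` is the cobase
change of `(i₀', i₁')` along `i₁ ⨿ 𝟙 : A ⨿ A ⟶ Cyl ⨿ A`. In a Mathlib model category this argument
is `HomotopicalAlgebra.Cylinder.trans` together with its `IsGood` instance. -/

namespace Paper

open HomotopicalAlgebra

variable {C : Type u} [Category.{v} C]

theorem IsRetractOf.of_retractArrow {A B X Y : C} {f : A ⟶ B} {g : X ⟶ Y}
    (r : RetractArrow f g) : IsRetractOf f g :=
  ⟨r.i.left, r.r.left, r.i.right, r.r.right, r.retract_left, r.retract_right, r.i_w, r.r_w⟩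

theorem isStableUnderRetracts_of_isRetractOf {P : MorphismProperty C}
    (hP : ∀ ⦃A B X Y : C⦄ {f : A ⟶ B} {g : X ⟶ Y}, IsRetractOf f g → P g → P f) :
    P.IsStableUnderRetracts :=
  ⟨fun r hg => hP (.of_retractArrow r) hg⟩

namespace ModelStructure

variable (m : ModelStructure C)

theorem hasTwoOutOfThreeProperty_W : m.W.HasTwoOutOfThreeProperty where
  comp_mem f g := (m.two_out_of_three f g).1
  of_precomp f g := (m.two_out_of_three f g).2.1
  of_postcomp f g := (m.two_out_of_three f g).2.2

theorem hasFactorization_trivCof_fib : m.TrivCof.HasFactorization m.Fib where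
  nonempty_mapFactorizationData f := by
    obtain ⟨Z, i, p, hi, hiW, hp, fac⟩ := m.factor_TrivCof_Fib f
    exact ⟨⟨Z, i, p, fac, ⟨hi, hiW⟩, hp⟩⟩

theorem hasFactorization_cof_trivFib : m.Cof.HasFactorization m.TrivFib where
  nonempty_mapFactorizationData f := by
    obtain ⟨Z, i, p, hi, hp, hpW, fac⟩ := m.factor_Cof_TrivFib f
    exact ⟨⟨Z, i, p, fac, hi, ⟨hp, hpW⟩⟩⟩

/-- The weak equivalences of `m`, as Mathlib's class: reducible and not an instance, since it
depends on the term `m`. -/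
abbrev categoryWithWeakEquivalences : CategoryWithWeakEquivalences C := ⟨m.W⟩

/-- The cofibrations of `m`, as Mathlib's class, again not an instance. -/
abbrev categoryWithCofibrations : CategoryWithCofibrations C := ⟨m.Cof⟩

/-- The Mathlib model category with the three classes of maps of `m`. -/
abbrev toModelCategory [HasFiniteLimits C] [HasFiniteColimits C] : ModelCategory C where
  categoryWithFibrations := ⟨m.Fib⟩
  categoryWithCofibrations := m.categoryWithCofibrations
  categoryWithWeakEquivalences := m.categoryWithWeakEquivalences
  cm2 := m.hasTwoOutOfThreeProperty_W
  cm3a := isStableUnderRetracts_of_isRetractOf m.retract_W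
  cm3b := isStableUnderRetracts_of_isRetractOf m.retract_Fib
  cm3c := isStableUnderRetracts_of_isRetractOf m.retract_Cof
  cm4a i p hi hiW hp := m.lift_TrivCof_Fib i p hi.mem hiW.mem hp.mem
  cm4b i p hi hp hpW := m.lift_Cof_TrivFib i p hi.mem hp.mem hpW.mem
  cm5a := m.hasFactorization_trivCof_fib
  cm5b := m.hasFactorization_cof_trivFib

end ModelStructure

variable [HasBinaryCoproducts C] {m : ModelStructure C} {A : C}

/-- A cylinder object in the sense of `IsCylinder`, as a Mathlib cylinder. Mathlib's `Cylinder`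
does not ask for `(i₀, i₁)` to be a cofibration: that is `Cylinder.IsGood`. -/
abbrev IsCylinder.toCylinder {Cyl : C} {i₀ i₁ : A ⟶ Cyl} {p : Cyl ⟶ A}
    (h : IsCylinder m A Cyl i₀ i₁ p) :
    letI := m.categoryWithWeakEquivalences
    Cylinder A :=
  letI := m.categoryWithWeakEquivalences
  { I := Cyl
    i₀ := i₀
    i₁ := i₁
    π := p
    i₀_π := h.comp₀
    i₁_π := h.comp₁
    weakEquivalence_π := ⟨h.weq⟩ }

theorem isCylinder_iff_isGood :
    letI := m.categoryWithWeakEquivalences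
    letI := m.categoryWithCofibrations
    ∀ P : Cylinder A, IsCylinder m A P.I P.i₀ P.i₁ P.π ↔ P.IsGood := by
  intro P
  let _ := m.categoryWithWeakEquivalences
  let _ := m.categoryWithCofibrations
  constructor
  · exact fun h => ⟨⟨h.cof⟩⟩
  · exact fun hP => ⟨hP.cofibration_i.mem, P.weakEquivalence_π.mem, P.i₀_π, P.i₁_π⟩

end Paper

theorem statement5_general {M : Type u} [Category.{v} M] [HasFiniteLimits M] [HasFiniteColimits M]
    (m : Paper.ModelStructure M) {A : M} (hA : m.Cofibrant A)
    {Cyl Cyl' : M} {i₀ i₁ : A ⟶ Cyl} {p : Cyl ⟶ A} {i₀' i₁' : A ⟶ Cyl'} {p' : Cyl' ⟶ A}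
    (h : Paper.IsCylinder m A Cyl i₀ i₁ p) (h' : Paper.IsCylinder m A Cyl' i₀' i₁' p') :
    Paper.IsCylinder m A (pushout i₁ i₀') (i₀ ≫ pushout.inl i₁ i₀') (i₁' ≫ pushout.inr i₁ i₀')
      (pushout.desc p p' (h.comp₁.trans h'.comp₀.symm)) := by
  let _ := m.toModelCategory
  have : HomotopicalAlgebra.IsCofibrant A := ⟨hA⟩
  have : h.toCylinder.IsGood := (Paper.isCylinder_iff_isGood _).1 h
  have : h'.toCylinder.IsGood := (Paper.isCylinder_iff_isGood _).1 h'
  exact (Paper.isCylinder_iff_isGood (h.toCylinder.trans h'.toCylinder)).2 inferInstance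

/-- Gluing two cylinder objects for a cofibrant object `A` along the end of the
first and the beginning of the second yields again a cylinder object for `A`. -/
theorem statement5 {M : Type u} [Category.{v} M] [Limits.HasLimits M] [Limits.HasColimits M]
    (m : Paper.ModelStructure M) {A : M} (hA : m.Cofibrant A)
    (Cyl Cyl' : M) (i₀ i₁ : A ⟶ Cyl) (p : Cyl ⟶ A) (i₀' i₁' : A ⟶ Cyl') (p' : Cyl' ⟶ A)
    (h : Paper.IsCylinder m A Cyl i₀ i₁ p) (h' : Paper.IsCylinder m A Cyl' i₀' i₁' p') :
    Paper.IsCylinder m A (Limits.pushout i₁ i₀')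
      (i₀ ≫ Limits.pushout.inl i₁ i₀') (i₁' ≫ Limits.pushout.inr i₁ i₀')
      (Limits.pushout.desc p p' (h.comp₁.trans h'.comp₀.symm)) :=
  statement5_general m hA h h'
end

section
/- (Dugger's lemma) Let M and N be model categories and let L : M → N and R : N → M be an adjoint pair of functors, with L left adjoint to R. Then the following are equivalent: (i) L preserves cofibrations and trivial cofibrations (i.e. (L, R) is a Quillen pair); (ii) L preserves cofibrations between cofibrant objects and preserves all trivial cofibrations; (iii) R preserves fibrations between fibrant objects and preserves all trivial fibrations. -/
open CategoryTheory CategoryTheory.Limits CategoryTheory.MonoidalCategory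

universe v u v₂ u₂

/-!
By lifting, `R` preserves fibrations as soon as `L` preserves trivial cofibrations. A map with the
right lifting property against cofibrations between cofibrant objects is a weak equivalence:
replace its source by a cofibrant object, factor the resulting map as a cofibration followed by a
trivial fibration, lift against this cofibration, and apply a weak form of two-out-of-six. Hence
(ii) makes `R` preserve all fibrations and all trivial fibrations, which is stronger than (iii).
The same implication for the opposite adjunction `R.op ⊣ L.op` reads (iii) ⇒ (i).
-/

namespace Paper

variable {C : Type u} [Category.{v} C] {D : Type u₂} [Category.{v₂} D]

theorem isRetractOf_iff_nonempty_retractArrow {A B X Y : C} {f : A ⟶ B} {g : X ⟶ Y} :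
    IsRetractOf f g ↔ Nonempty (RetractArrow f g) := by
  constructor
  · rintro ⟨iA, rA, iB, rB, hA, hB, hi, hr⟩
    exact ⟨{ i := Arrow.homMk iA iB hi
             r := Arrow.homMk rA rB hr
             retract := Arrow.hom_ext _ _ hA hB }⟩
  · rintro ⟨h⟩
    exact ⟨h.i.left, h.r.left, h.i.right, h.r.right, h.retract_left, h.retract_right, h.i_w, h.r_w⟩

theorem IsRetractOf.unop {A B X Y : Cᵒᵖ} {f : A ⟶ B} {g : X ⟶ Y} (h : IsRetractOf f g) :
    IsRetractOf f.unop g.unop := by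
  rw [isRetractOf_iff_nonempty_retractArrow] at h ⊢
  exact h.map RetractArrow.unop

theorem rlp_le_inverseImage_rlp {L : C ⥤ D} {R : D ⥤ C} (adj : L ⊣ R)
    {P : MorphismProperty C} {Q : MorphismProperty D} (h : P ≤ Q.inverseImage L) :
    Q.rlp ≤ P.rlp.inverseImage R :=
  fun _ _ p hp _ _ i hi => (adj.hasLiftingProperty_iff i p).1 (hp _ (h i hi))

namespace ModelStructure

variable (M : ModelStructure C) (N : ModelStructure D)

/-- The opposite model structure on `Cᵒᵖ`, in which cofibrations and fibrations trade places. It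
turns statements about left lifting properties and cofibrant objects into their duals. -/
def op : ModelStructure Cᵒᵖ where
  W := M.W.op
  Cof := M.Fib.op
  Fib := M.Cof.op
  two_out_of_three _ _ _ f g :=
    have h := M.two_out_of_three g.unop f.unop
    ⟨fun hf hg => h.1 hg hf, h.2.2, h.2.1⟩
  retract_W _ _ _ _ _ _ h := M.retract_W h.unop
  retract_Cof _ _ _ _ _ _ h := M.retract_Fib h.unop
  retract_Fib _ _ _ _ _ _ h := M.retract_Cof h.unop
  lift_Cof_TrivFib _ _ _ _ i p hi hp hpW := (M.lift_TrivCof_Fib p.unop i.unop hp hpW hi).op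
  lift_TrivCof_Fib _ _ _ _ i p hi hiW hp := (M.lift_Cof_TrivFib p.unop i.unop hp hi hiW).op
  factor_Cof_TrivFib _ _ f := by
    obtain ⟨Z, i, p, hi, hiW, hp, fac⟩ := M.factor_TrivCof_Fib f.unop
    exact ⟨.op Z, p.op, i.op, hp, hi, hiW, Quiver.Hom.unop_inj fac⟩
  factor_TrivCof_Fib _ _ f := by
    obtain ⟨Z, i, p, hi, hp, hpW, fac⟩ := M.factor_Cof_TrivFib f.unop
    exact ⟨.op Z, p.op, i.op, hp, hpW, hi, Quiver.Hom.unop_inj fac⟩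

instance : M.W.HasTwoOutOfThreeProperty where
  comp_mem f g := (M.two_out_of_three f g).1
  of_precomp f g := (M.two_out_of_three f g).2.1
  of_postcomp f g := (M.two_out_of_three f g).2.2

instance : M.W.IsStableUnderRetracts where
  of_retract h := M.retract_W (isRetractOf_iff_nonempty_retractArrow.2 ⟨h⟩)

instance : M.Cof.IsStableUnderRetracts where
  of_retract h := M.retract_Cof (isRetractOf_iff_nonempty_retractArrow.2 ⟨h⟩)

instance : M.Fib.IsStableUnderRetracts where
  of_retract h := M.retract_Fib (isRetractOf_iff_nonempty_retractArrow.2 ⟨h⟩)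

instance : MorphismProperty.HasFactorization M.Cof M.TrivFib where
  nonempty_mapFactorizationData f := by
    obtain ⟨Z, i, p, hi, hp, hpW, fac⟩ := M.factor_Cof_TrivFib f
    exact ⟨{ Z, i, p, fac, hi, hp := ⟨hp, hpW⟩ }⟩

instance : MorphismProperty.HasFactorization M.TrivCof M.Fib where
  nonempty_mapFactorizationData f := by
    obtain ⟨Z, i, p, hi, hiW, hp, fac⟩ := M.factor_TrivCof_Fib f
    exact ⟨{ Z, i, p, fac, hi := ⟨hi, hiW⟩, hp }⟩

theorem llp_trivFib : M.TrivFib.llp = M.Cof :=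
  MorphismProperty.llp_eq_of_le_llp_of_hasFactorization_of_isStableUnderRetracts
    fun _ _ i hi _ _ p hp => M.lift_Cof_TrivFib i p hi hp.1 hp.2

theorem rlp_trivCof : M.TrivCof.rlp = M.Fib :=
  MorphismProperty.rlp_eq_of_le_rlp_of_hasFactorization_of_isStableUnderRetracts
    fun _ _ p hp _ _ i hi => M.lift_TrivCof_Fib i p hi.1 hi.2 hp

theorem trivFib_le_rlp_cof : M.TrivFib ≤ M.Cof.rlp := by
  rw [← M.llp_trivFib, ← MorphismProperty.le_llp_iff_le_rlp]

instance : M.Cof.IsStableUnderComposition := by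
  rw [← M.llp_trivFib]
  infer_instance

section WeakEquivalences

variable {M}

theorem W_of_comp_eq_id {X Y : C} {s : Y ⟶ X} {c : X ⟶ Y} (hcs : c ≫ s = 𝟙 X) (hsc : M.W (s ≫ c)) :
    M.W c := by
  refine M.retract_W ⟨c, s, 𝟙 Y, 𝟙 Y, hcs, Category.id_comp _, ?_, ?_⟩ hsc
  · rw [reassoc_of% hcs, Category.comp_id]
  · rw [Category.comp_id]

/-- An instance of two-out-of-six that is elementary: a lift of `c` against `c ≫ l` exhibits `c`
as a retract of a weak equivalence. -/
theorem W_of_W_comp_of_trivFib_comp {X Y Z T : C} {c : X ⟶ Y} {l : Y ⟶ Z} {f : Z ⟶ T}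
    (hc : M.Cof c) (hcl : M.TrivFib (c ≫ l)) (hlf : M.W (l ≫ f)) : M.W f := by
  obtain ⟨s, hcs, hsl⟩ : ∃ s : Y ⟶ X, c ≫ s = 𝟙 X ∧ s ≫ c ≫ l = l := by
    have := M.lift_Cof_TrivFib c (c ≫ l) hc hcl.1 hcl.2
    have sq : CommSq (𝟙 X) c (c ≫ l) l := ⟨Category.id_comp _⟩
    exact ⟨sq.lift, sq.fac_left, sq.fac_right⟩
  have hsc : M.W (s ≫ c) := by
    refine M.W.of_postcomp (s ≫ c) (l ≫ f) hlf ?_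
    have : (s ≫ c) ≫ l ≫ f = l ≫ f := by
      simpa only [Category.assoc] using hsl =≫ f
    rwa [this]
  have hl : M.W l := M.W.of_precomp c l (W_of_comp_eq_id hcs hsc) hcl.2
  exact M.W.of_precomp l f hl hlf

end WeakEquivalences

section Cofibrant

variable [HasInitial C]

/-- The cofibrations between cofibrant objects. -/
def CofibrantCof : MorphismProperty C := fun A B i => M.Cofibrant A ∧ M.Cofibrant B ∧ M.Cof i

theorem cofibrantCof_le_cof : M.CofibrantCof ≤ M.Cof := fun _ _ _ hi => hi.2.2

theorem cofibrantCof_le_iff {P : MorphismProperty C} :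
    M.CofibrantCof ≤ P ↔
      ∀ ⦃A B : C⦄ (i : A ⟶ B), M.Cofibrant A → M.Cofibrant B → M.Cof i → P i :=
  ⟨fun h _ _ i hA hB hi => h i ⟨hA, hB, hi⟩, fun h _ _ i hi => h i hi.1 hi.2.1 hi.2.2⟩

variable {M}

theorem cofibrant_iff_cof_to {I : C} (hI : IsInitial I) {X : C} :
    M.Cofibrant X ↔ M.Cof (hI.to X) := by
  let e := initialIsInitial.uniqueUpToIso hI
  rw [Cofibrant, initialIsInitial.hom_ext (initial.to X) (e.hom ≫ hI.to X)]
  exact M.Cof.cancel_left_of_respectsIso e.hom (hI.to X)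

theorem Cofibrant.of_cof {A B : C} {i : A ⟶ B} (hA : M.Cofibrant A) (hi : M.Cof i) :
    M.Cofibrant B := by
  have hcomp : M.Cof (initial.to A ≫ i) := M.Cof.comp_mem _ _ hA hi
  rwa [initial.to_comp] at hcomp

variable (M) in
theorem exists_cofibrant_trivFib (X : C) :
    ∃ (X' : C) (j : X' ⟶ X), M.Cofibrant X' ∧ M.TrivFib j := by
  obtain ⟨X', i, j, hi, hj, hjW, -⟩ := M.factor_Cof_TrivFib (initial.to X)
  refine ⟨X', j, ?_, hj, hjW⟩
  rwa [Cofibrant, initialIsInitial.hom_ext (initial.to X') i]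

variable (M) in
theorem rlp_cofibrantCof_le_W : M.CofibrantCof.rlp ≤ M.W := by
  intro X Y f hf
  obtain ⟨X', j, hX', hj⟩ := M.exists_cofibrant_trivFib X
  obtain ⟨Y', c, k, hc, -, hk, fac⟩ := M.factor_Cof_TrivFib (j ≫ f)
  obtain ⟨l, hcl, hlf⟩ : ∃ l : Y' ⟶ X, c ≫ l = j ∧ l ≫ f = k := by
    have := hf c ⟨hX', hX'.of_cof hc, hc⟩
    have sq : CommSq j c f k := ⟨fac.symm⟩
    exact ⟨sq.lift, sq.fac_left, sq.fac_right⟩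
  exact W_of_W_comp_of_trivFib_comp hc (hcl ▸ hj) (hlf ▸ hk)

end Cofibrant

section Fibrant

variable [HasTerminal C]

/-- The fibrations between fibrant objects. -/
def FibrantFib : MorphismProperty C := fun X Y p => M.Fibrant X ∧ M.Fibrant Y ∧ M.Fib p

theorem fibrantFib_le_fib : M.FibrantFib ≤ M.Fib := fun _ _ _ hp => hp.2.2

theorem fibrantFib_le_iff {P : MorphismProperty C} :
    M.FibrantFib ≤ P ↔
      ∀ ⦃X Y : C⦄ (p : X ⟶ Y), M.Fibrant X → M.Fibrant Y → M.Fib p → P p :=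
  ⟨fun h _ _ p hX hY hp => h p ⟨hX, hY, hp⟩, fun h _ _ p hp => h p hp.1 hp.2.1 hp.2.2⟩

theorem cofibrant_op_iff {X : Cᵒᵖ} : M.op.Cofibrant X ↔ M.Fibrant X.unop :=
  cofibrant_iff_cof_to (initialOpOfTerminal terminalIsTerminal)

theorem cofibrantCof_op : M.op.CofibrantCof = M.FibrantFib.op := by
  ext A B i
  simp only [CofibrantCof, cofibrant_op_iff, MorphismProperty.op, FibrantFib]
  exact and_left_comm

end Fibrant

section Adjunction

variable {M N} {L : C ⥤ D} {R : D ⥤ C}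

theorem fib_and_trivFib_le_inverseImage [HasInitial C] (adj : L ⊣ R)
    (hCof : M.CofibrantCof ≤ N.Cof.inverseImage L) (hTriv : M.TrivCof ≤ N.TrivCof.inverseImage L) :
    N.Fib ≤ M.Fib.inverseImage R ∧ N.TrivFib ≤ M.TrivFib.inverseImage R := by
  have hFib : N.Fib ≤ M.Fib.inverseImage R := by
    simpa only [rlp_trivCof] using rlp_le_inverseImage_rlp adj hTriv
  have hW : N.TrivFib ≤ M.W.inverseImage R :=
    calc N.TrivFib ≤ N.Cof.rlp := N.trivFib_le_rlp_cof
      _ ≤ M.CofibrantCof.rlp.inverseImage R := rlp_le_inverseImage_rlp adj hCof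
      _ ≤ M.W.inverseImage R := fun _ _ p hp => M.rlp_cofibrantCof_le_W _ hp
  exact ⟨hFib, fun _ _ p hp => ⟨hFib p hp.1, hW p hp⟩⟩

theorem cof_and_trivCof_le_inverseImage [HasTerminal D] (adj : L ⊣ R)
    (hFib : N.FibrantFib ≤ M.Fib.inverseImage R) (hTriv : N.TrivFib ≤ M.TrivFib.inverseImage R) :
    M.Cof ≤ N.Cof.inverseImage L ∧ M.TrivCof ≤ N.TrivCof.inverseImage L := by
  have hFib_op : N.op.CofibrantCof ≤ M.op.Cof.inverseImage R.op := by
    rw [cofibrantCof_op]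
    exact fun _ _ p hp => hFib p.unop hp
  have hTriv_op : N.op.TrivCof ≤ M.op.TrivCof.inverseImage R.op :=
    fun _ _ p hp => hTriv p.unop hp
  obtain ⟨hCof, hTrivCof⟩ := fib_and_trivFib_le_inverseImage adj.op hFib_op hTriv_op
  exact ⟨fun _ _ i hi => hCof i.op hi, fun _ _ i hi => hTrivCof i.op hi⟩

end Adjunction

end ModelStructure

end Paper

theorem statement9_general {M : Type u} [Category.{v} M] {N : Type u₂} [Category.{v₂} N]
    [HasInitial M] [HasTerminal N] (mM : Paper.ModelStructure M) (mN : Paper.ModelStructure N)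
    (L : M ⥤ N) (R : N ⥤ M) (adj : L ⊣ R) :
    List.TFAE
      [mM.Cof ≤ mN.Cof.inverseImage L ∧ mM.TrivCof ≤ mN.TrivCof.inverseImage L,
        mM.CofibrantCof ≤ mN.Cof.inverseImage L ∧ mM.TrivCof ≤ mN.TrivCof.inverseImage L,
        mN.FibrantFib ≤ mM.Fib.inverseImage R ∧ mN.TrivFib ≤ mM.TrivFib.inverseImage R,
        mN.Fib ≤ mM.Fib.inverseImage R ∧ mN.TrivFib ≤ mM.TrivFib.inverseImage R] := by
  tfae_have 1 → 2 := fun ⟨hCof, hTriv⟩ => ⟨mM.cofibrantCof_le_cof.trans hCof, hTriv⟩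
  tfae_have 2 → 4 := fun ⟨hCof, hTriv⟩ =>
    Paper.ModelStructure.fib_and_trivFib_le_inverseImage adj hCof hTriv
  tfae_have 4 → 3 := fun ⟨hFib, hTriv⟩ => ⟨mN.fibrantFib_le_fib.trans hFib, hTriv⟩
  tfae_have 3 → 1 := fun ⟨hFib, hTriv⟩ =>
    Paper.ModelStructure.cof_and_trivCof_le_inverseImage adj hFib hTriv
  tfae_finish

/-- Dugger's lemma: For an adjoint pair `L ⊣ R` between model categories,
the following are equivalent: (i) `L` preserves cofibrations and trivial cofibrations;
(ii) `L` preserves cofibrations between cofibrant objects and all trivial cofibrations;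
(iii) `R` preserves fibrations between fibrant objects and all trivial fibrations. -/
theorem statement9 {M : Type u} [Category.{v} M] {N : Type u₂} [Category.{v₂} N]
    [Limits.HasLimits M] [Limits.HasColimits M] [Limits.HasLimits N] [Limits.HasColimits N]
    (mM : Paper.ModelStructure M) (mN : Paper.ModelStructure N)
    (L : M ⥤ N) (R : N ⥤ M) (adj : L ⊣ R) :
    (((∀ ⦃A B : M⦄ (f : A ⟶ B), mM.Cof f → mN.Cof (L.map f)) ∧
        (∀ ⦃A B : M⦄ (f : A ⟶ B), mM.TrivCof f → mN.TrivCof (L.map f))) ↔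
      ((∀ ⦃A B : M⦄ (f : A ⟶ B), mM.Cofibrant A → mM.Cofibrant B → mM.Cof f →
          mN.Cof (L.map f)) ∧
        (∀ ⦃A B : M⦄ (f : A ⟶ B), mM.TrivCof f → mN.TrivCof (L.map f)))) ∧
    (((∀ ⦃A B : M⦄ (f : A ⟶ B), mM.Cofibrant A → mM.Cofibrant B → mM.Cof f →
          mN.Cof (L.map f)) ∧
        (∀ ⦃A B : M⦄ (f : A ⟶ B), mM.TrivCof f → mN.TrivCof (L.map f))) ↔
      ((∀ ⦃X Y : N⦄ (p : X ⟶ Y), mN.Fibrant X → mN.Fibrant Y → mN.Fib p →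
          mM.Fib (R.map p)) ∧
        (∀ ⦃X Y : N⦄ (p : X ⟶ Y), mN.TrivFib p → mM.TrivFib (R.map p)))) := by
  have h := statement9_general mM mN L R adj
  rw [mM.cofibrantCof_le_iff, mN.fibrantFib_le_iff] at h
  exact ⟨h.out 0 1, h.out 1 2⟩
end

section
/- Let M be a cocomplete category, H a small filtered category, and I a set of maps of M such that the source and target of every map in I are finitely presentable. Let p : X ⟶ Y be a natural transformation between functors X, Y : H → M such that for every object h of H the component p_h : X(h) → Y(h) has the right lifting property with respect to every map in I. Then the induced map colim_H X → colim_H Y on colimits has the right lifting property with respect to every map in I. -/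
open CategoryTheory CategoryTheory.Limits CategoryTheory.MonoidalCategory

universe v u v₂ u₂

/-! A finitely presentable object sees a filtered colimit stagewise: a map into the colimit factors
through some stage, and two such factorizations agree at a later stage. A square from `i : A ⟶ B`
to the induced map on colimits therefore comes from a square from `i` to a single component
`p.app l`: the top edge lifts to one stage, the bottom edge to another, and finite presentability of
`A` makes the lifted square commute further on. A lift at stage `l` then gives a lift in the
colimit. -/

namespace Paper

variable {C : Type u} [Category.{v} C]

lemma FinitelyPresentable.preservesColimitsOfShape {A : C} (hA : FinitelyPresentable A)
    (J : Type v) [SmallCategory J] [IsFiltered J] :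
    PreservesColimitsOfShape J (coyoneda.obj (.op A)) :=
  (hA J _ inferInstance).some

section FilteredColimit

variable {J : Type u₂} [Category.{v₂} J] [IsFiltered J] {X Y : J ⥤ C} {cX : Cocone X}
  {cY : Cocone Y} {A B : C} [PreservesColimit X (coyoneda.obj (.op A))]
  [PreservesColimit Y (coyoneda.obj (.op A))] [PreservesColimit Y (coyoneda.obj (.op B))]

lemma exists_commSq_app_of_isColimit (hX : IsColimit cX) (hY : IsColimit cY) {p : X ⟶ Y}
    {φ : cX.pt ⟶ cY.pt} (hφ : ∀ j, cX.ι.app j ≫ φ = p.app j ≫ cY.ι.app j)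
    {i : A ⟶ B} {f : A ⟶ cX.pt} {g : B ⟶ cY.pt} (sq : CommSq f i φ g) :
    ∃ (l : J) (a : A ⟶ X.obj l) (b : B ⟶ Y.obj l),
      CommSq a i (p.app l) b ∧ a ≫ cX.ι.app l = f ∧ b ≫ cY.ι.app l = g := by
  obtain ⟨j, a, ha⟩ := exists_hom_of_preservesColimit_coyoneda hX f
  obtain ⟨k, b, hb⟩ := exists_hom_of_preservesColimit_coyoneda hY g
  have comm_in_colimit : (a ≫ p.app j) ≫ cY.ι.app j = (i ≫ b) ≫ cY.ι.app k :=
    calc (a ≫ p.app j) ≫ cY.ι.app j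
      _ = (a ≫ cX.ι.app j) ≫ φ := by rw [Category.assoc, Category.assoc, hφ]
      _ = i ≫ g := by rw [ha, sq.w]
      _ = (i ≫ b) ≫ cY.ι.app k := by rw [Category.assoc, hb]
  obtain ⟨l, s, t, comm_at_l⟩ := exists_eq_of_preservesColimit_coyoneda hY _ _ comm_in_colimit
  refine ⟨l, a ≫ X.map s, b ≫ Y.map t, ⟨?_⟩, ?_, ?_⟩
  · simpa only [Category.assoc, p.naturality] using comm_at_l
  · rw [Category.assoc, cX.w, ha]
  · rw [Category.assoc, cY.w, hb]

lemma hasLiftingProperty_of_isColimit (hX : IsColimit cX) (hY : IsColimit cY) {p : X ⟶ Y}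
    {φ : cX.pt ⟶ cY.pt} (hφ : ∀ j, cX.ι.app j ≫ φ = p.app j ≫ cY.ι.app j)
    {i : A ⟶ B} [∀ j, HasLiftingProperty i (p.app j)] :
    HasLiftingProperty i φ where
  sq_hasLift sq := by
    obtain ⟨l, a, b, sq_l, rfl, rfl⟩ := exists_commSq_app_of_isColimit hX hY hφ sq
    exact ⟨⟨{
      l := sq_l.lift ≫ cX.ι.app l
      fac_left := by rw [sq_l.fac_left_assoc]
      fac_right := by rw [Category.assoc, hφ, sq_l.fac_right_assoc] }⟩⟩

end FilteredColimit

end Paper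

theorem statement10_general {C : Type u} [Category.{v} C] (J : Type u₂) [Category.{v₂} J]
    [IsFiltered J] (I : MorphismProperty C)
    (hI : ∀ ⦃A B : C⦄ (i : A ⟶ B), I i →
      PreservesColimitsOfShape J (coyoneda.obj (.op A)) ∧
        PreservesColimitsOfShape J (coyoneda.obj (.op B))) :
    I.rlp.IsStableUnderColimitsOfShape J where
  condition _ _ _ _ hX hY _ hp _ hφ _ _ i hi := by
    obtain ⟨_, _⟩ := hI i hi
    have := fun j ↦ hp j i hi
    exact Paper.hasLiftingProperty_of_isColimit hX hY hφ

/-- In a cocomplete category, if a natural transformation `p : X ⟶ Y` of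
filtered diagrams has all components with the right lifting property with respect to a set
`I` of maps with finitely presentable sources and targets, then the induced map on colimits
also has the right lifting property with respect to every map in `I`. -/
theorem statement10 {M : Type u} [Category.{v} M] [Limits.HasColimits M]
    (H : Type v) [SmallCategory H] [IsFiltered H]
    (I : CategoryTheory.MorphismProperty M)
    (hI : ∀ ⦃A B : M⦄ (i : A ⟶ B), I i →
      Paper.FinitelyPresentable A ∧ Paper.FinitelyPresentable B)
    (X Y : H ⥤ M) (p : X ⟶ Y)
    (hp : ∀ (h : H) ⦃A B : M⦄ (i : A ⟶ B), I i → HasLiftingProperty i (p.app h)) :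
    ∀ ⦃A B : M⦄ (i : A ⟶ B), I i → HasLiftingProperty i (Limits.colimMap p) := by
  have := statement10_general H I fun _ _ i hi ↦
    ⟨(hI i hi).1.preservesColimitsOfShape H, (hI i hi).2.preservesColimitsOfShape H⟩
  exact MorphismProperty.colimMap (W := I.rlp) p hp
end
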